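/- Let R be a commutative Noetherian ring, I an ideal with IM ≠ M for a finite R-module M. Then grade(I, M), the maximal length of an M-regular sequence contained in I, equals min{i : Ext^i_R(R/I, M) ≠ 0}. -/

import Mathlib

open CategoryTheory

noncomputable def extGroup (R : Type) [CommRing R] (i : ℕ) (M N : Type)
    [AddCommGroup M] [Module R M] [AddCommGroup N] [Module R N] : Type :=
  ((Ext R (ModuleCat R) i).obj (Opposite.op (ModuleCat.of R M))).obj (ModuleCat.of R N)

noncomputable instance (R : Type) [CommRing R] (i : ℕ) (M N : Type)
    [AddCommGroup M] [Module R M] [AddCommGroup N] [Module R N] :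
    AddCommGroup (extGroup R i M N) := by unfold extGroup; infer_instance

noncomputable instance (R : Type) [CommRing R] (i : ℕ) (M N : Type)
    [AddCommGroup M] [Module R M] [AddCommGroup N] [Module R N] :
    Module R (extGroup R i M N) := by unfold extGroup; infer_instance

/-- The depth of a Noetherian local ring `A`, i.e. `grade(𝔪, A)`:
the least `i` with `Ext^i_A(A/𝔪, A) ≠ 0`. -/
noncomputable def depthOf (A : Type) [CommRing A] [IsLocalRing A] : ℕ :=
  sInf {i | Nontrivial (extGroup A i (IsLocalRing.ResidueField A) A)}

/-- The cohomology of `Hom(P, Y)` at `n` vanishes exactly when cocycles are coboundaries. -/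
lemma ChainComplex.exactAt_linearYonedaObj_iff {R : Type} [CommRing R]
    (P : ChainComplex (ModuleCat.{0} R) ℕ) (Y : ModuleCat.{0} R) {i n : ℕ}
    (hi : (ComplexShape.up ℕ).prev n = i) :
    (P.linearYonedaObj R Y).ExactAt n ↔
      ∀ f : P.X n ⟶ Y, P.d (n + 1) n ≫ f = 0 → ∃ g : P.X i ⟶ Y, P.d n i ≫ g = f := by
  rw [HomologicalComplex.exactAt_iff' _ i n (n + 1) hi (by simp),
    ShortComplex.moduleCat_exact_iff]
  rfl

lemma CategoryTheory.ProjectiveResolution.subsingleton_ext_iff {R : Type} [CommRing R]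
    {X : ModuleCat.{0} R} (P : ProjectiveResolution X) (Y : ModuleCat.{0} R) (n : ℕ) :
    Subsingleton (Abelian.Ext X Y n) ↔ (P.complex.linearYonedaObj R Y).ExactAt n := by
  cases n with
  | zero =>
    rw [Abelian.Ext.addEquiv₀.toEquiv.subsingleton_congr,
      ChainComplex.exactAt_linearYonedaObj_iff _ _ CochainComplex.prev_nat_zero]
    change Subsingleton (((ChainComplex.single₀ _).obj X).X 0 ⟶ Y) ↔ _
    constructor
    · intro h f hf
      obtain ⟨g, hg⟩ := P.exact₀.desc' f hf
      rw [← hg, h.elim g 0]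
      exact ⟨0, Limits.comp_zero.trans Limits.comp_zero.symm⟩
    · refine fun h ↦ subsingleton_of_forall_eq 0 fun g ↦ ?_
      obtain ⟨k, hk⟩ := h (P.π.f 0 ≫ g)
        (by rw [zero_add, ← Category.assoc, P.complex_d_comp_π_f_zero, Limits.zero_comp])
      rw [P.complex.shape _ _ (by simp), Limits.zero_comp] at hk
      exact Limits.zero_of_epi_comp (P.π.f 0) hk.symm
  | succ p =>
    rw [ChainComplex.exactAt_linearYonedaObj_iff _ _ (CochainComplex.prev_nat_succ p)]
    constructor
    · intro h f hf
      exact (P.extMk_eq_zero_iff f _ rfl hf p rfl).mp (Subsingleton.elim _ _)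
    · refine fun h ↦ subsingleton_of_forall_eq 0 fun x ↦ ?_
      obtain ⟨f, hf, rfl⟩ := P.extMk_surjective x _ rfl
      exact (P.extMk_eq_zero_iff f _ rfl hf p rfl).mpr (h f hf)

/-- `Ext` as a derived functor and `Ext` in the derived category vanish simultaneously. -/
lemma subsingleton_extGroup_iff {R : Type} [CommRing R] (n : ℕ) (M N : Type)
    [AddCommGroup M] [Module R M] [AddCommGroup N] [Module R N] :
    Subsingleton (extGroup R n M N) ↔
      Subsingleton (Abelian.Ext (ModuleCat.of R M) (ModuleCat.of R N) n) := by
  let P := projectiveResolution (ModuleCat.of R M)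
  rw [P.subsingleton_ext_iff, HomologicalComplex.exactAt_iff_isZero_homology,
    ← (P.isoExt (R := R) n (ModuleCat.of R N)).isZero_iff, ModuleCat.isZero_iff_subsingleton]
  rfl

/-- If `S.f` induces zero on `Ext(X, -)`, the long exact sequence splits into short ones. -/
lemma CategoryTheory.ShortComplex.ShortExact.subsingleton_ext_X₃_iff {C : Type*} [Category* C]
    [Abelian C] [HasExt C] {S : ShortComplex C} (hS : S.ShortExact) (X : C)
    (hf : ∀ (k : ℕ) (e : Abelian.Ext X S.X₁ k),
      e.comp (Abelian.Ext.mk₀ S.f) (add_zero k) = 0) (n : ℕ) :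
    Subsingleton (Abelian.Ext X S.X₃ n) ↔
      Subsingleton (Abelian.Ext X S.X₂ n) ∧ Subsingleton (Abelian.Ext X S.X₁ (n + 1)) := by
  constructor
  · refine fun h ↦ ⟨subsingleton_of_forall_eq 0 fun e ↦ ?_,
      subsingleton_of_forall_eq 0 fun e ↦ ?_⟩
    · obtain ⟨e', rfl⟩ := Abelian.Ext.covariant_sequence_exact₂ _ hS e (Subsingleton.elim _ _)
      exact hf n e'
    · obtain ⟨e', rfl⟩ := Abelian.Ext.covariant_sequence_exact₁ _ hS e (hf _ e) rfl
      rw [Subsingleton.elim e' 0, Abelian.Ext.zero_comp]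
  · rintro ⟨h₂, h₁⟩
    refine subsingleton_of_forall_eq 0 fun e ↦ ?_
    obtain ⟨e', rfl⟩ := Abelian.Ext.covariant_sequence_exact₃ _ hS e rfl (Subsingleton.elim _ _)
    rw [Subsingleton.elim e' 0, Abelian.Ext.zero_comp]

/-- If `x` annihilates `N` and is `M`-regular, then the vanishing of `Ext^i(N, M/xM)` is that of
both `Ext^i(N, M)` and `Ext^(i+1)(N, M)`. -/
lemma subsingleton_ext_quotSMulTop_iff {R : Type} [CommRing R] {M N : Type}
    [AddCommGroup M] [Module R M] [AddCommGroup N] [Module R N] {x : R}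
    (hreg : IsSMulRegular M x) (hN : x ∈ Module.annihilator R N) (n : ℕ) :
    Subsingleton (Abelian.Ext (ModuleCat.of R N) (ModuleCat.of R (QuotSMulTop x M)) n) ↔
      Subsingleton (Abelian.Ext (ModuleCat.of R N) (ModuleCat.of R M) n) ∧
        Subsingleton (Abelian.Ext (ModuleCat.of R N) (ModuleCat.of R M) (n + 1)) := by
  have hid : x • 𝟙 (ModuleCat.of R N) = 0 := by
    ext y
    exact Module.mem_annihilator.mp hN y
  have hzero (k : ℕ) (e : Abelian.Ext (ModuleCat.of R N) (ModuleCat.of R M) k) :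
      e.comp (Abelian.Ext.mk₀ (x • 𝟙 (ModuleCat.of R M))) (add_zero k) = 0 := by
    rw [← Abelian.Ext.smul_eq_comp_mk₀, ← Abelian.Ext.mk₀_id_comp e, ← Abelian.Ext.smul_comp,
      ← Abelian.Ext.mk₀_smul, hid, Abelian.Ext.mk₀_zero, Abelian.Ext.zero_comp]
  exact (IsSMulRegular.smulShortComplex_shortExact (M := ModuleCat.of R M)
    hreg).subsingleton_ext_X₃_iff _ hzero n

lemma subsingleton_ext_zero_iff {R : Type} [CommRing R] [IsNoetherianRing R] {M N : Type}
    [AddCommGroup M] [Module R M] [Module.Finite R M]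
    [AddCommGroup N] [Module R N] [Module.Finite R N] :
    Subsingleton (Abelian.Ext (ModuleCat.of R N) (ModuleCat.of R M) 0) ↔
      ∃ x ∈ Module.annihilator R N, IsSMulRegular M x := by
  rw [Abelian.Ext.addEquiv₀.toEquiv.subsingleton_congr,
    ModuleCat.homEquiv.subsingleton_congr, IsSMulRegular.subsingleton_linearMap_iff]

/-- A finite module over a Noetherian ring has a weakly regular sequence of length `n` in the
annihilator of `N` if and only if `Ext^i(N, M)` vanishes for all `i < n`. -/
lemma exists_isWeaklyRegular_length_eq_iff {R : Type} [CommRing R] [IsNoetherianRing R]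
    {N : Type} [AddCommGroup N] [Module R N] [Module.Finite R N] (n : ℕ) (M : Type)
    [AddCommGroup M] [Module R M] [Module.Finite R M] :
    (∃ rs : List R, rs.length = n ∧ (∀ x ∈ rs, x ∈ Module.annihilator R N) ∧
        RingTheory.Sequence.IsWeaklyRegular M rs) ↔
      ∀ i < n, Subsingleton (Abelian.Ext (ModuleCat.of R N) (ModuleCat.of R M) i) := by
  induction n generalizing M with
  | zero => simp
  | succ n ih =>
    constructor
    · rintro ⟨_ | ⟨x, rs⟩, hlen, hmem, hreg⟩
      · simp at hlen
      rw [RingTheory.Sequence.isWeaklyRegular_cons_iff] at hreg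
      rw [List.forall_mem_cons] at hmem
      have h := (ih (QuotSMulTop x M)).mp ⟨rs, by simpa using hlen, hmem.2, hreg.2⟩
      rintro (_ | i) hi
      · exact subsingleton_ext_zero_iff.mpr ⟨x, hmem.1, hreg.1⟩
      · exact ((subsingleton_ext_quotSMulTop_iff hreg.1 hmem.1 i).mp (h i (by lia))).2
    · intro h
      obtain ⟨x, hx, hreg⟩ := subsingleton_ext_zero_iff.mp (h 0 n.succ_pos)
      obtain ⟨rs, hlen, hmem, hrs⟩ := (ih (QuotSMulTop x M)).mpr fun i hi ↦
        (subsingleton_ext_quotSMulTop_iff hreg hx i).mpr ⟨h i (by lia), h (i + 1) (by lia)⟩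
      exact ⟨x :: rs, by simp [hlen], List.forall_mem_cons.mpr ⟨hx, hmem⟩, .cons hreg hrs⟩

lemma RingTheory.Sequence.isRegular_iff_isWeaklyRegular_of_forall_mem {R M : Type*} [CommRing R]
    [AddCommGroup M] [Module R M] {I : Ideal R} (hIM : I • (⊤ : Submodule R M) ≠ ⊤)
    {rs : List R} (hrs : ∀ x ∈ rs, x ∈ I) :
    IsRegular M rs ↔ IsWeaklyRegular M rs := by
  refine ⟨fun h ↦ h.toIsWeaklyRegular, fun h ↦ ⟨h, fun htop ↦ hIM ?_⟩⟩
  exact top_le_iff.mp (htop.le.trans (Submodule.smul_mono_left (Ideal.span_le.mpr hrs)))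

lemma Nat.sSup_setOf_forall_lt_notMem (S : Set ℕ) : sSup {n : ℕ | ∀ i < n, i ∉ S} = sInf S := by
  rcases S.eq_empty_or_nonempty with rfl | hS
  · simp
  · have : {n : ℕ | ∀ i < n, i ∉ S} = Set.Iic (sInf S) := by
      ext n
      exact ⟨fun h ↦ not_lt.mp fun hn ↦ h _ hn (Nat.sInf_mem hS),
        fun h i hi ↦ Nat.notMem_of_lt_sInf (hi.trans_le h)⟩
    rw [this, csSup_Iic]

/-- For a commutative Noetherian ring `R`, a finite `R`-module `M` and an ideal
`I` with `IM ≠ M`, the maximal length of an `M`-regular sequence contained in `I` equals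
`min {i | Ext^i_R(R/I, M) ≠ 0}`. -/
theorem grade_eq_min_ext_ne_zero
    (R : Type) [CommRing R] [IsNoetherianRing R]
    (M : Type) [AddCommGroup M] [Module R M] [Module.Finite R M]
    (I : Ideal R) (hIM : I • (⊤ : Submodule R M) ≠ ⊤) :
    sSup {r : ℕ | ∃ rs : List R, rs.length = r ∧ (∀ x ∈ rs, x ∈ I) ∧
        RingTheory.Sequence.IsRegular M rs} =
      sInf {i | Nontrivial (extGroup R i (R ⧸ I) M)} := by
  rw [← Nat.sSup_setOf_forall_lt_notMem]
  congr 1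
  ext n
  have h := exists_isWeaklyRegular_length_eq_iff (R := R) (N := R ⧸ I) n M
  rw [Ideal.annihilator_quotient] at h
  simp only [Set.mem_ofPred_eq, not_nontrivial_iff_subsingleton, subsingleton_extGroup_iff, ← h]
  refine exists_congr fun rs ↦ and_congr_right fun _ ↦ and_congr_right fun hrs ↦ ?_
  exact RingTheory.Sequence.isRegular_iff_isWeaklyRegular_of_forall_mem hIM hrs
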